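/- arXiv:2008.13424 — 2 statements merged into one kernel-verified Lean document; each statement's English description precedes it below -/
import Mathlib

section
/- Let M̄ be a real-valued random variable with M̄ > 0 almost surely and with E[exp(M̄)] < ∞ and E[exp(−M̄)] < ∞ (both positive). Let ε, η ∈ (0, 1), let d ≥ 1 be an integer, and let h, i, k, n be positive reals; set r = n/k and R = i/h. Suppose r ≥ R^{−1/d} (1 + ε)^{−2/d} log((2/η) E[exp(M̄)]) and r ≤ −R^{−1/d} (1 − ε)^{−2/d} log((2/η) E[exp(−M̄)]). Then P( |√((k M̄ / n)^d · (h / i)) − 1| ≥ ε ) ≤ η. -/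
open MeasureTheory ProbabilityTheory

lemma netflow_aux (R s : ℝ) (hR : 0 < R) (hs : 0 < s) (d : ℕ) (hd : 1 ≤ d) :
    ∃ c : ℝ, 0 < c ∧ c ^ d = R * s ^ 2 ∧
      R ^ (-(1 : ℝ) / d) * s ^ (-(2 : ℝ) / d) = c⁻¹ := by
  have hd' : (d : ℝ) ≠ 0 := by positivity
  refine ⟨R ^ ((1 : ℝ) / d) * s ^ ((2 : ℝ) / d), by positivity, ?_, ?_⟩
  · rw [mul_pow, ← Real.rpow_natCast, ← Real.rpow_natCast, ← Real.rpow_mul hR.le,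
      ← Real.rpow_mul hs.le, div_mul_cancel₀ _ hd', div_mul_cancel₀ _ hd', Real.rpow_one]
    norm_num
  · rw [neg_div, neg_div, Real.rpow_neg hR.le, Real.rpow_neg hs.le, mul_inv]

/-- Proposition 5 of the paper in scalar form: if the ratio `r = n/k` of the number of
NetFlows to the number of complete flows lies between the stated lower and upper bounds,
then the ratio of confidence-ellipsoid volumes `√((k M̄/n)^d (h/i))` deviates from `1` by at
least `ε` with probability at most `η`. -/
theorem netflow_relative_efficiency_bound {Ω : Type*} [MeasureSpace Ω]
    [IsProbabilityMeasure (ℙ : Measure Ω)]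
    (M : Ω → ℝ) (hMmeas : Measurable M) (hMpos : ∀ᵐ ω ∂ℙ, 0 < M ω)
    (hInt₁ : Integrable (fun ω => Real.exp (M ω)) ℙ)
    (hInt₂ : Integrable (fun ω => Real.exp (-(M ω))) ℙ)
    (hpos₁ : 0 < ∫ ω, Real.exp (M ω) ∂ℙ)
    (hpos₂ : 0 < ∫ ω, Real.exp (-(M ω)) ∂ℙ)
    (ε η : ℝ) (hε : ε ∈ Set.Ioo (0 : ℝ) 1) (hη : η ∈ Set.Ioo (0 : ℝ) 1)
    (d : ℕ) (hd : 1 ≤ d)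
    (h i k n : ℝ) (hh : 0 < h) (hi : 0 < i) (hk : 0 < k) (hn : 0 < n)
    (r R : ℝ) (hr : r = n / k) (hR : R = i / h)
    (hlow : R ^ (-(1 : ℝ) / d) * (1 + ε) ^ (-(2 : ℝ) / d) *
        Real.log ((2 / η) * ∫ ω, Real.exp (M ω) ∂ℙ) ≤ r)
    (hup : r ≤ -(R ^ (-(1 : ℝ) / d) * (1 - ε) ^ (-(2 : ℝ) / d) *
        Real.log ((2 / η) * ∫ ω, Real.exp (-(M ω)) ∂ℙ))) :
    ℙ {ω : Ω | ε ≤ |Real.sqrt ((k * M ω / n) ^ d * (h / i)) - 1|} ≤ ENNReal.ofReal η := by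
  obtain ⟨hε0, hε1⟩ := hε
  obtain ⟨hη0, hη1⟩ := hη
  have hRpos : 0 < R := by rw [hR]; positivity
  have hrpos : 0 < r := by rw [hr]; positivity
  obtain ⟨a, ha, had, hae⟩ := netflow_aux R (1 + ε) hRpos (by linarith) d hd
  obtain ⟨b, hb, hbd, hbe⟩ := netflow_aux R (1 - ε) hRpos (by linarith) d hd
  rw [hae, inv_mul_le_iff₀ ha] at hlow
  rw [hbe, ← mul_neg, le_inv_mul_iff₀ hb] at hup
  have hd0 : d ≠ 0 := by omega
  have h1 : (ℙ : Measure Ω).real {ω | a * r ≤ M ω} ≤ η / 2 := by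
    have := measure_ge_le_exp_mul_mgf (μ := (ℙ : Measure Ω)) (X := M) (t := 1) (a * r)
      zero_le_one (by simpa using hInt₁)
    simp only [mgf, one_mul, neg_mul] at this
    refine this.trans ?_
    have h2 := Real.exp_le_exp.2 hlow
    rw [Real.exp_log (by positivity)] at h2
    rw [Real.exp_neg, inv_mul_le_iff₀ (Real.exp_pos _)]
    calc _ = (2 / η * ∫ ω, Real.exp (M ω) ∂ℙ) * (η / 2) := by field_simp
      _ ≤ _ := by gcongr
  have h2 : (ℙ : Measure Ω).real {ω | M ω ≤ b * r} ≤ η / 2 := by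
    have := measure_le_le_exp_mul_mgf (μ := (ℙ : Measure Ω)) (X := M) (t := -1) (b * r)
      (by norm_num) (by simpa using hInt₂)
    simp only [mgf, one_mul, neg_mul, neg_neg] at this
    refine this.trans ?_
    have h2 := Real.exp_le_exp.2 hup
    rw [Real.exp_neg, Real.exp_log (by positivity)] at h2
    calc _ ≤ (2 / η * ∫ ω, Real.exp (-(M ω)) ∂ℙ)⁻¹ * ∫ ω, Real.exp (-(M ω)) ∂ℙ := by gcongr
      _ = _ := by
        generalize (∫ ω, Real.exp (-(M ω)) ∂ℙ) = E at *
        field_simp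
  have hsub : ℙ {ω : Ω | ε ≤ |Real.sqrt ((k * M ω / n) ^ d * (h / i)) - 1|} ≤
      ℙ ({ω | a * r ≤ M ω} ∪ {ω | M ω ≤ b * r}) := by
    apply measure_mono_ae
    filter_upwards [hMpos] with ω hM hω
    change ε ≤ |Real.sqrt ((k * M ω / n) ^ d * (h / i)) - 1| at hω
    change a * r ≤ M ω ∨ M ω ≤ b * r
    have hx : (k * M ω / n) ^ d * (h / i) = (M ω / r) ^ d / R := by
      have : k * M ω / n = M ω / r := by rw [hr]; field_simp
      rw [this, hR]; field_simp
    rw [hx] at hω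
    rcases le_abs.1 hω with h3 | h3
    · left
      have h4 := (Real.le_sqrt' (by linarith)).1 (by linarith : 1 + ε ≤ √((M ω / r) ^ d / R))
      rw [le_div_iff₀ hRpos, mul_comm, ← had, pow_le_pow_iff_left₀ ha.le (by positivity) hd0,
        le_div_iff₀ hrpos] at h4
      exact h4
    · right
      have h4 := (Real.sqrt_le_left (by linarith)).1 (by linarith : √((M ω / r) ^ d / R) ≤ 1 - ε)
      rw [div_le_iff₀ hRpos, mul_comm, ← hbd, pow_le_pow_iff_left₀ (by positivity) hb.le hd0,
        div_le_iff₀ hrpos] at h4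
      exact h4
  refine hsub.trans ?_
  rw [← ofReal_measureReal]
  apply ENNReal.ofReal_le_ofReal
  have := measureReal_union_le (μ := (ℙ : Measure Ω)) {ω | a * r ≤ M ω} {ω | M ω ≤ b * r}
  linarith
end

section
/- Let d ≥ 1 be an integer, ε ∈ (0, 1), η ∈ (0, 1), R > 0, a > 0, b > 0, and set A = ((1 + ε)/(1 − ε))^{2/d}. Define L = R^{−1/d} (1 + ε)^{−2/d} log((2/η) a) and U = −R^{−1/d} (1 − ε)^{−2/d} log((2/η) b). Then L < U if and only if a · b^A < (η/2)^{A+1}. -/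
/-- With `A = ((1+ε)/(1−ε))^{2/d}`, `L = R^{−1/d}(1+ε)^{−2/d} log((2/η)a)` and
`U = −R^{−1/d}(1−ε)^{−2/d} log((2/η)b)`, the admissible interval `(L, U)` is nonempty,
i.e. `L < U`, if and only if `a · b^A < (η/2)^{A+1}`. -/
theorem netflow_bounds_nonempty_iff (d : ℕ) (hd : 1 ≤ d)
    (ε η R a b : ℝ) (hε : ε ∈ Set.Ioo (0 : ℝ) 1) (hη : η ∈ Set.Ioo (0 : ℝ) 1)
    (hR : 0 < R) (ha : 0 < a) (hb : 0 < b)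
    (A L U : ℝ)
    (hA : A = ((1 + ε) / (1 - ε)) ^ ((2 : ℝ) / d))
    (hL : L = R ^ (-(1 : ℝ) / d) * (1 + ε) ^ (-(2 : ℝ) / d) * Real.log ((2 / η) * a))
    (hU : U = -(R ^ (-(1 : ℝ) / d) * (1 - ε) ^ (-(2 : ℝ) / d) * Real.log ((2 / η) * b))) :
    L < U ↔ a * b ^ A < (η / 2) ^ (A + 1) := by
  obtain ⟨h0, h1⟩ := hε
  obtain ⟨k0, k1⟩ := hη
  have p1 : 0 < 1 + ε := by linarith
  have p2 : 0 < 1 - ε := by linarith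
  have hη2 : 0 < η / 2 := by linarith
  have key : (1 - ε) ^ (-(2 : ℝ) / d) = (1 + ε) ^ (-(2 : ℝ) / d) * A := by
    rw [hA, Real.div_rpow p1.le p2.le, neg_div, Real.rpow_neg p1.le, Real.rpow_neg p2.le]
    have := (Real.rpow_pos_of_pos p1 ((2 : ℝ) / d)).ne'
    have := (Real.rpow_pos_of_pos p2 ((2 : ℝ) / d)).ne'
    field_simp
  have hc : 0 < R ^ (-(1 : ℝ) / d) * (1 + ε) ^ (-(2 : ℝ) / d) :=
    mul_pos (Real.rpow_pos_of_pos hR _) (Real.rpow_pos_of_pos p1 _)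
  have e : (2 : ℝ) / η = (η / 2)⁻¹ := by rw [inv_div]
  have hla : Real.log ((2 / η) * a) = Real.log a - Real.log (η / 2) := by
    rw [e, Real.log_mul (inv_ne_zero hη2.ne') ha.ne', Real.log_inv]; ring
  have hlb : Real.log ((2 / η) * b) = Real.log b - Real.log (η / 2) := by
    rw [e, Real.log_mul (inv_ne_zero hη2.ne') hb.ne', Real.log_inv]; ring
  have hbA := Real.rpow_pos_of_pos hb A
  rw [← Real.log_lt_log_iff (mul_pos ha hbA) (Real.rpow_pos_of_pos hη2 _),
    Real.log_mul ha.ne' hbA.ne', Real.log_rpow hb, Real.log_rpow hη2]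
  have hU' : U = (R ^ (-(1 : ℝ) / d) * (1 + ε) ^ (-(2 : ℝ) / d)) *
      (-(A * (Real.log b - Real.log (η / 2)))) := by
    rw [hU, key, hlb]; ring
  rw [hL, hU', hla, mul_lt_mul_iff_right₀ hc]
  constructor <;> intro h <;> linarith
end
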